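/- arXiv:2109.11879 — 2 statements merged into one kernel-verified Lean document; each statement's English description precedes it below -/
import Mathlib

section
/- Let ñ be a real number with ñ > 6000 and let n = ⌈ñ⌉. Then the minimum of ρ_DB(A,B) over all pairs of disjoint nonempty finite sets A, B ⊆ ℤ² with |A| = n and |B| = n satisfies ⌈2√(12ñ)⌉ ≤ min ρ_DB(A,B) ≤ ⌈2√(12ñ)⌉ + 1. (Here 2√(12ñ) = 2√(6(ñ+ñ)) is the continuous ℓ¹ double bubble minimum for two equal volumes ñ.) -/
/-!
For disjoint `A, B`, the quantity `rhoDB A B` is half of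
`edgeP A + edgeP B + edgeP (A ∪ B)` (`two_mul_rhoDB`).

Lower bound. The perimeter of a finite set is at least twice the sum of the sizes of its two
coordinate projections (`two_mul_proj_le_edgeP`). Let `u, v` be the sizes of the projections of
`A, B` to the first axis, `q` the size of the intersection of these projections, and `u', v', q'`
the analogues for the second axis. Then `rhoDB A B ≥ X + X'` with `X = 2u + 2v - q` and
`X' = 2u' + 2v' - q'`. Counting points in boxes gives `n ≤ uu'`, `n ≤ vv'` and
`2n ≤ uu' + vv' - qq'`, since inside the common `q × q'` box the disjoint sets compete for the
same points. The first two give `uv' + vu' ≥ 2n` by AM-GM, and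
`XX' - 4(uu' + vv' - qq') - 2(uv' + vu')`
is `2(u-q)(v'-q') + 2(v-q)(u'-q') + qq' ≥ 0`, so `XX' ≥ 12n` and `(X + X')² ≥ 48n`
(`lower_arith`).

Upper bound. Fill `n` cells column by column, in columns of height `h`, starting at a vertical
line, and reflect the result in that line. If `n ≤ wh` this costs at most `4w + 3h`
(`rhoDB_wing_le`). With `K = ⌈2√(12ñ)⌉`, so that `K² > 48(n-1)`, the equation `4w + 3h = K + 1`
has an integer solution with `4w` and `3h` within `6` of `(K+1)/2`; then
`48wh ≥ (K+1)² - 144 ≥ 48n` as soon as `K ≥ 95` (`exists_dims`).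
-/

/-- The four lattice neighbors of a point in `ℤ × ℤ` (the points at `ℓ¹` distance 1). -/
def nbrs (u : ℤ × ℤ) : Finset (ℤ × ℤ) :=
  {(u.1 + 1, u.2), (u.1 - 1, u.2), (u.1, u.2 + 1), (u.1, u.2 - 1)}

/-- Edge perimeter of a finite subset of `ℤ × ℤ`: the number of unordered pairs
`{u, v}` with `‖u - v‖₁ = 1` and exactly one of `u, v` in `A` (counted via the
endpoint lying in `A`). -/
def edgeP (A : Finset (ℤ × ℤ)) : ℕ :=
  ∑ u ∈ A, ((nbrs u).filter (fun v => v ∉ A)).card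

/-- Number of unordered pairs `{u, v}` with `‖u - v‖₁ = 1`, `u ∈ A`, `v ∈ B`. -/
def crossE (A B : Finset (ℤ × ℤ)) : ℕ :=
  ∑ u ∈ A, ((nbrs u).filter (fun v => v ∈ B)).card

/-- Discrete double bubble perimeter: `P(A ∪ B) + e(A, B)`, so the shared
boundary is counted once. -/
def rhoDB (A B : Finset (ℤ × ℤ)) : ℕ := edgeP (A ∪ B) + crossE A B

/-! ### Counting edges by direction -/

/-- The number of points `u` of `A` whose translate `u + d` lies in `B`. -/
def dirIn (A B : Finset (ℤ × ℤ)) (d : ℤ × ℤ) : ℕ := (A.filter (fun u => u + d ∈ B)).card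

/-- The number of points `u` of `A` whose translate `u + d` lies outside `A`, that is, the number
of boundary edges of `A` with outward direction `d`. -/
def dirOut (A : Finset (ℤ × ℤ)) (d : ℤ × ℤ) : ℕ := (A.filter (fun u => u + d ∉ A)).card

lemma card_nbrs_filter (u : ℤ × ℤ) (p : ℤ × ℤ → Prop) [DecidablePred p] :
    ((nbrs u).filter p).card = (if p (u + (1, 0)) then 1 else 0) + (if p (u + (-1, 0)) then 1 else 0)
      + (if p (u + (0, 1)) then 1 else 0) + (if p (u + (0, -1)) then 1 else 0) := by
  obtain ⟨x, y⟩ := u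
  have e : nbrs (x, y) = {(x + 1, y), (x - 1, y), (x, y + 1), (x, y - 1)} := rfl
  rw [Finset.card_filter, e, Finset.sum_insert, Finset.sum_insert, Finset.sum_insert,
    Finset.sum_singleton]
  · simp only [Prod.mk_add_mk, add_zero, sub_eq_add_neg]
    ring
  all_goals
    simp only [Finset.mem_insert, Finset.mem_singleton, Prod.mk.injEq, not_or, not_and]
    omega

lemma edgeP_eq (A : Finset (ℤ × ℤ)) :
    edgeP A = dirOut A (1, 0) + dirOut A (-1, 0) + dirOut A (0, 1) + dirOut A (0, -1) := by
  unfold edgeP dirOut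
  simp_rw [card_nbrs_filter, Finset.sum_add_distrib, Finset.card_filter]

lemma crossE_eq (A B : Finset (ℤ × ℤ)) :
    crossE A B = dirIn A B (1, 0) + dirIn A B (-1, 0) + dirIn A B (0, 1) + dirIn A B (0, -1) := by
  unfold crossE dirIn
  simp_rw [card_nbrs_filter, Finset.sum_add_distrib, Finset.card_filter]

lemma dirIn_symm (A B : Finset (ℤ × ℤ)) (d : ℤ × ℤ) : dirIn A B d = dirIn B A (-d) := by
  unfold dirIn
  refine Finset.card_bij' (fun u _ => u + d) (fun u _ => u + -d) ?_ ?_ ?_ ?_ <;>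
    simp +contextual

lemma dirOut_add (A B : Finset (ℤ × ℤ)) (hAB : Disjoint A B) (d : ℤ × ℤ) :
    dirOut A d + dirOut B d = dirOut (A ∪ B) d + dirIn A B d + dirIn B A d := by
  unfold dirOut dirIn
  have hdis : ∀ v, v ∈ A → v ∉ B := fun v hv hv' => Finset.disjoint_left.1 hAB hv hv'
  simp only [Finset.card_filter]
  rw [Finset.sum_union hAB]
  have h1 : ∑ u ∈ A, (if u + d ∉ A then 1 else 0)
      = ∑ u ∈ A, (if u + d ∉ A ∪ B then 1 else 0) + ∑ u ∈ A, (if u + d ∈ B then 1 else 0) := by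
    rw [← Finset.sum_add_distrib]
    refine Finset.sum_congr rfl fun u _ => ?_
    have := hdis (u + d)
    by_cases h1 : u + d ∈ A <;> by_cases h2 : u + d ∈ B <;> simp_all
  have h2 : ∑ u ∈ B, (if u + d ∉ B then 1 else 0)
      = ∑ u ∈ B, (if u + d ∉ A ∪ B then 1 else 0) + ∑ u ∈ B, (if u + d ∈ A then 1 else 0) := by
    rw [← Finset.sum_add_distrib]
    refine Finset.sum_congr rfl fun u _ => ?_
    have := hdis (u + d)
    by_cases h1 : u + d ∈ A <;> by_cases h2 : u + d ∈ B <;> simp_all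
  omega

lemma two_mul_rhoDB (A B : Finset (ℤ × ℤ)) (hAB : Disjoint A B) :
    2 * rhoDB A B = edgeP A + edgeP B + edgeP (A ∪ B) := by
  have h1 := dirOut_add A B hAB (1, 0)
  have h2 := dirOut_add A B hAB (-1, 0)
  have h3 := dirOut_add A B hAB (0, 1)
  have h4 := dirOut_add A B hAB (0, -1)
  have s1 := dirIn_symm B A (1, 0)
  have s2 := dirIn_symm B A (-1, 0)
  have s3 := dirIn_symm B A (0, 1)
  have s4 := dirIn_symm B A (0, -1)
  simp only [Prod.neg_mk, neg_zero, neg_neg] at s1 s2 s3 s4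
  unfold rhoDB
  rw [edgeP_eq A, edgeP_eq B, edgeP_eq (A ∪ B), crossE_eq]
  omega

/-! ### Lower bound -/

/-- Suppose `π` is constant along direction `d` and `ℓ` increases along it. Every line
`π = const` that meets `A` carries a boundary edge in direction `d`, at the point of `A` on that
line where `ℓ` is maximal. -/
lemma card_image_le_dirOut (A : Finset (ℤ × ℤ)) (d : ℤ × ℤ) (π ℓ : ℤ × ℤ → ℤ)
    (hπ : ∀ u, π (u + d) = π u) (hℓ : ∀ u, ℓ u < ℓ (u + d)) :
    (A.image π).card ≤ dirOut A d := by
  unfold dirOut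
  refine (Finset.card_le_card ?_).trans (Finset.card_image_le (f := π))
  intro t ht
  obtain ⟨u, hu, rfl⟩ := Finset.mem_image.1 ht
  obtain ⟨m, hm, hmax⟩ := Finset.exists_max_image (A.filter (fun v => π v = π u)) ℓ
    ⟨u, by simp [hu]⟩
  simp only [Finset.mem_filter] at hm hmax
  refine Finset.mem_image.2 ⟨m, Finset.mem_filter.2 ⟨hm.1, fun h => ?_⟩, hm.2⟩
  exact absurd (hmax (m + d) ⟨h, (hπ m).trans hm.2⟩) (not_le.2 (hℓ m))

lemma two_mul_proj_le_edgeP (A : Finset (ℤ × ℤ)) :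
    2 * ((A.image Prod.fst).card + (A.image Prod.snd).card) ≤ edgeP A := by
  rw [edgeP_eq]
  have h1 := card_image_le_dirOut A (1, 0) Prod.snd Prod.fst (by simp) (by simp)
  have h2 := card_image_le_dirOut A (-1, 0) Prod.snd (fun u => -u.1) (by simp) (by simp)
  have h3 := card_image_le_dirOut A (0, 1) Prod.fst Prod.snd (by simp) (by simp)
  have h4 := card_image_le_dirOut A (0, -1) Prod.fst (fun u => -u.2) (by simp) (by simp)
  omega

lemma subset_proj (A : Finset (ℤ × ℤ)) : A ⊆ A.image Prod.fst ×ˢ A.image Prod.snd := fun _ hu =>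
  Finset.mem_product.2 ⟨Finset.mem_image_of_mem _ hu, Finset.mem_image_of_mem _ hu⟩

/-- `A ∪ B` lies in the union of the bounding boxes of `A` and `B`, whose intersection is the
product of the intersections of the projections. -/
lemma card_add_card_le (A B : Finset (ℤ × ℤ)) (hAB : Disjoint A B) :
    A.card + B.card + (A.image Prod.fst ∩ B.image Prod.fst).card
        * (A.image Prod.snd ∩ B.image Prod.snd).card
      ≤ (A.image Prod.fst).card * (A.image Prod.snd).card
        + (B.image Prod.fst).card * (B.image Prod.snd).card := by
  have h := Finset.card_union_add_card_inter (A.image Prod.fst ×ˢ A.image Prod.snd)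
    (B.image Prod.fst ×ˢ B.image Prod.snd)
  rw [Finset.product_inter_product] at h
  simp only [Finset.card_product] at h
  rw [← h, ← Finset.card_union_of_disjoint hAB]
  gcongr <;> exact subset_proj _

lemma lower_arith (n u v q u' v' q' : ℤ) (hn : 0 ≤ n) (hq : 0 ≤ q) (hq' : 0 ≤ q')
    (hu : q ≤ u) (hv : q ≤ v) (hu' : q' ≤ u') (hv' : q' ≤ v')
    (h1 : n ≤ u * u') (h2 : n ≤ v * v') (h3 : 2 * n + q * q' ≤ u * u' + v * v') :
    48 * n ≤ ((2 * u + 2 * v - q) + (2 * u' + 2 * v' - q')) ^ 2 := by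
  have hs : 0 ≤ u * v' + v * u' := by
    have := mul_nonneg (hq.trans hu) (hq'.trans hv')
    have := mul_nonneg (hq.trans hv) (hq'.trans hu')
    linarith
  have hm : n * n ≤ (u * u') * (v * v') := mul_le_mul h1 h2 hn (hn.trans h1)
  have hc : 2 * n ≤ u * v' + v * u' := by
    refine abs_le_of_sq_le_sq' ?_ hs |>.2
    nlinarith [sq_nonneg (u * v' - v * u')]
  nlinarith [mul_nonneg (sub_nonneg.2 hu) (sub_nonneg.2 hv'),
    mul_nonneg (sub_nonneg.2 hv) (sub_nonneg.2 hu'), mul_nonneg hq hq',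
    sq_nonneg ((2 * u + 2 * v - q) - (2 * u' + 2 * v' - q'))]

lemma lower_bound (A B : Finset (ℤ × ℤ)) (hAB : Disjoint A B) (n : ℤ)
    (hA : (A.card : ℤ) = n) (hB : (B.card : ℤ) = n) : 48 * n ≤ (rhoDB A B : ℤ) ^ 2 := by
  have h := two_mul_rhoDB A B hAB
  have pA := two_mul_proj_le_edgeP A
  have pB := two_mul_proj_le_edgeP B
  have pS := two_mul_proj_le_edgeP (A ∪ B)
  rw [Finset.image_union, Finset.image_union] at pS
  have c1 := Finset.card_union_add_card_inter (A.image Prod.fst) (B.image Prod.fst)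
  have c2 := Finset.card_union_add_card_inter (A.image Prod.snd) (B.image Prod.snd)
  have b := card_add_card_le A B hAB
  have bA := Finset.card_le_card (subset_proj A)
  have bB := Finset.card_le_card (subset_proj B)
  have i1 := Finset.card_le_card (Finset.inter_subset_left (s₁ := A.image Prod.fst)
    (s₂ := B.image Prod.fst))
  have i2 := Finset.card_le_card (Finset.inter_subset_right (s₁ := A.image Prod.fst)
    (s₂ := B.image Prod.fst))
  have i3 := Finset.card_le_card (Finset.inter_subset_left (s₁ := A.image Prod.snd)
    (s₂ := B.image Prod.snd))
  have i4 := Finset.card_le_card (Finset.inter_subset_right (s₁ := A.image Prod.snd)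
    (s₂ := B.image Prod.snd))
  rw [Finset.card_product] at bA bB
  generalize (A.image Prod.fst).card = u at *
  generalize (B.image Prod.fst).card = v at *
  generalize (A.image Prod.snd).card = u' at *
  generalize (B.image Prod.snd).card = v' at *
  generalize (A.image Prod.fst ∩ B.image Prod.fst).card = q at *
  generalize (A.image Prod.snd ∩ B.image Prod.snd).card = q' at *
  zify at b bA bB
  have key := lower_arith n u v q u' v' q' (by omega) (by omega) (by omega) (by omega) (by omega)
    (by omega) (by omega) (by omega) (by omega) (by linarith)
  refine key.trans (pow_le_pow_left₀ (by omega) (by omega) 2)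

/-! ### Upper bound -/

/-- The `n` cells with non-negative abscissa obtained by filling columns of height `h` from
left to right, each from bottom to top. For `h = 0` it is a single column of height `n`. -/
def rightWing (n h : ℕ) : Finset (ℤ × ℤ) :=
  (Finset.range n).image (fun i => (((i / h : ℕ) : ℤ), ((i % h : ℕ) : ℤ)))

/-- The reflection of `rightWing n h` in the vertical line between abscissas `-1` and `0`. -/
def leftWing (n h : ℕ) : Finset (ℤ × ℤ) :=
  (rightWing n h).image (fun u => (-1 - u.1, u.2))

lemma card_rightWing (n h : ℕ) : (rightWing n h).card = n := by
  unfold rightWing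
  rw [Finset.card_image_of_injective, Finset.card_range]
  intro i j hij
  simp only [Prod.mk.injEq, Nat.cast_inj] at hij
  rw [← Nat.div_add_mod i h, ← Nat.div_add_mod j h, hij.1, hij.2]

lemma card_leftWing (n h : ℕ) : (leftWing n h).card = n := by
  unfold leftWing
  rw [Finset.card_image_of_injective, card_rightWing]
  rintro ⟨a, b⟩ ⟨c, d⟩ hij
  simp only [Prod.mk.injEq] at hij ⊢
  omega

lemma mem_rightWing {n h : ℕ} (hh : 0 < h) (x y : ℤ) :
    (x, y) ∈ rightWing n h ↔ 0 ≤ x ∧ 0 ≤ y ∧ y < h ∧ x * h + y < n := by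
  unfold rightWing
  simp only [Finset.mem_image, Finset.mem_range, Prod.mk.injEq]
  constructor
  · rintro ⟨i, hi, rfl, rfl⟩
    refine ⟨by positivity, by positivity, by exact_mod_cast Nat.mod_lt i hh, ?_⟩
    rw [← Nat.div_add_mod i h] at hi
    rw [mul_comm]
    exact_mod_cast hi
  · rintro ⟨hx, hy, hyh, hlt⟩
    lift x to ℕ using hx
    lift y to ℕ using hy
    norm_cast at hyh hlt
    refine ⟨x * h + y, hlt, ?_, ?_⟩
    · rw [add_comm, Nat.add_mul_div_right _ _ hh, Nat.div_eq_of_lt hyh, zero_add]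
    · rw [Nat.mul_add_mod', Nat.mod_eq_of_lt hyh]

lemma mem_leftWing {n h : ℕ} (x y : ℤ) :
    (x, y) ∈ leftWing n h ↔ (-1 - x, y) ∈ rightWing n h := by
  unfold leftWing
  simp only [Finset.mem_image, Prod.exists, Prod.mk.injEq]
  constructor
  · rintro ⟨a, b, hab, rfl, rfl⟩
    simpa using hab
  · intro hxy
    exact ⟨_, _, hxy, by ring, rfl⟩

lemma mem_wings {n h : ℕ} (hh : 0 < h) (x y : ℤ) :
    (x, y) ∈ rightWing n h ∪ leftWing n h ↔
      0 ≤ y ∧ y < h ∧ (0 ≤ x → x * h + y < n) ∧ (x < 0 → (-1 - x) * h + y < n) := by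
  rw [Finset.mem_union, mem_leftWing, mem_rightWing hh, mem_rightWing hh]
  generalize x * h + y = s
  generalize (-1 - x) * h + y = t
  omega

lemma dirOut_le_card (A : Finset (ℤ × ℤ)) (d : ℤ × ℤ) (π : ℤ × ℤ → ℤ) (T : Finset ℤ)
    (hT : ∀ u ∈ A, π u ∈ T)
    (hinj : ∀ u ∈ A, u + d ∉ A → ∀ v ∈ A, v + d ∉ A → π u = π v → u = v) :
    dirOut A d ≤ T.card := by
  refine Finset.card_le_card_of_injOn π (fun u hu => hT u (Finset.mem_filter.1 hu).1) ?_
  intro u hu v hv huv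
  have hu := Finset.mem_filter.1 hu
  have hv := Finset.mem_filter.1 hv
  exact hinj u hu.1 hu.2 v hv.1 hv.2 huv

/-- Rows of the union of the wings are intervals. -/
lemma wings_row_convex {n h : ℕ} (hh : 0 < h) {x x' z y : ℤ}
    (hx : (x, y) ∈ rightWing n h ∪ leftWing n h) (hx' : (x', y) ∈ rightWing n h ∪ leftWing n h)
    (h1 : x ≤ z) (h2 : z ≤ x') : (z, y) ∈ rightWing n h ∪ leftWing n h := by
  rw [mem_wings hh] at *
  have hh0 : (0 : ℤ) ≤ h := by positivity
  refine ⟨hx.1, hx.2.1, fun hz => ?_, fun hz => ?_⟩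
  · have := mul_le_mul_of_nonneg_right h2 hh0
    have := hx'.2.2.1 (by omega)
    omega
  · have := mul_le_mul_of_nonneg_right (show -1 - z ≤ -1 - x by omega) hh0
    have := hx.2.2.2 (by omega)
    omega

/-- Columns of the union of the wings are intervals. -/
lemma wings_col_convex {n h : ℕ} (hh : 0 < h) {x y y' z : ℤ}
    (hy : (x, y) ∈ rightWing n h ∪ leftWing n h) (hy' : (x, y') ∈ rightWing n h ∪ leftWing n h)
    (h1 : y ≤ z) (h2 : z ≤ y') : (x, z) ∈ rightWing n h ∪ leftWing n h := by
  rw [mem_wings hh] at *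
  refine ⟨by omega, by omega, fun hx => ?_, fun hx => ?_⟩
  · have := hy'.2.2.1 hx
    omega
  · have := hy'.2.2.2 hx
    omega

lemma disjoint_wings {n h : ℕ} (hh : 0 < h) : Disjoint (rightWing n h) (leftWing n h) := by
  rw [Finset.disjoint_left]
  rintro ⟨x, y⟩ h1 h2
  rw [mem_leftWing] at h2
  rw [mem_rightWing hh] at h1 h2
  omega

/-- Edges between the wings join abscissas `0` and `-1`, at most one in each of `h` rows. -/
lemma crossE_wing_le {n h : ℕ} (hh : 0 < h) : crossE (rightWing n h) (leftWing n h) ≤ h := by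
  have hz : ∀ d : ℤ × ℤ, 0 ≤ d.1 → dirIn (rightWing n h) (leftWing n h) d = 0 := by
    rintro ⟨a, b⟩ hd
    refine Finset.card_eq_zero.2 (Finset.filter_eq_empty_iff.2 ?_)
    rintro ⟨x, y⟩ h1 h2
    rw [Prod.mk_add_mk, mem_leftWing, mem_rightWing hh] at h2
    rw [mem_rightWing hh] at h1
    simp only at hd
    omega
  have hd : dirIn (rightWing n h) (leftWing n h) (-1, 0) ≤ (Finset.Ico (0 : ℤ) h).card := by
    refine Finset.card_le_card_of_injOn Prod.snd ?_ ?_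
    · rintro ⟨x, y⟩ hu
      have hu := (mem_rightWing hh x y).1 (Finset.mem_filter.1 hu).1
      exact Finset.mem_coe.2 (Finset.mem_Ico.2 ⟨hu.2.1, hu.2.2.1⟩)
    · rintro ⟨x, y⟩ hu ⟨x', y'⟩ hv huv
      have hu := Finset.mem_filter.1 hu
      have hv := Finset.mem_filter.1 hv
      rw [Prod.mk_add_mk, mem_leftWing, mem_rightWing hh, mem_rightWing hh] at hu hv
      simp only [Prod.mk.injEq] at huv ⊢
      omega
  rw [Int.card_Ico] at hd
  rw [crossE_eq, hz (1, 0) (by simp), hz (0, 1) (by simp), hz (0, -1) (by simp)]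
  omega

lemma rhoDB_wing_le {n w h : ℕ} (hh : 0 < h) (hn : n ≤ w * h) :
    rhoDB (rightWing n h) (leftWing n h) ≤ 4 * w + 3 * h := by
  have hc := crossE_wing_le (n := n) hh
  have hrow : ∀ u ∈ rightWing n h ∪ leftWing n h, u.2 ∈ Finset.Ico (0 : ℤ) h := by
    rintro ⟨x, y⟩ hu
    rw [mem_wings hh] at hu
    exact Finset.mem_Ico.2 ⟨hu.1, hu.2.1⟩
  have hcol : ∀ u ∈ rightWing n h ∪ leftWing n h, u.1 ∈ Finset.Ico (-w : ℤ) w := by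
    rintro ⟨x, y⟩ hu
    rw [mem_wings hh] at hu
    have hh0 : (0 : ℤ) ≤ h := by positivity
    zify at hn
    refine Finset.mem_Ico.2 ⟨?_, ?_⟩ <;> by_contra hcon
    · have := mul_le_mul_of_nonneg_right (show (w : ℤ) ≤ -1 - x by simp only at hcon; omega) hh0
      have := hu.2.2.2 (by simp only at hcon; omega)
      omega
    · have := mul_le_mul_of_nonneg_right (show (w : ℤ) ≤ x by simp only at hcon; omega) hh0
      have := hu.2.2.1 (by simp only at hcon; omega)
      omega
  -- On a line that meets the union in an interval, only the last point has its successor outside.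
  have d1 : dirOut (rightWing n h ∪ leftWing n h) (1, 0) ≤ _ := dirOut_le_card _ _ _ _ hrow (by
    rintro ⟨x, y⟩ hu hu' ⟨x', y'⟩ hv hv' (rfl : y = y')
    rw [Prod.mk_add_mk, add_zero] at hu' hv'
    rcases lt_trichotomy x x' with hlt | rfl | hlt
    · exact absurd (wings_row_convex hh hu hv (by omega) (by omega)) hu'
    · rfl
    · exact absurd (wings_row_convex hh hv hu (by omega) (by omega)) hv')
  have d2 : dirOut (rightWing n h ∪ leftWing n h) (-1, 0) ≤ _ := dirOut_le_card _ _ _ _ hrow (by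
    rintro ⟨x, y⟩ hu hu' ⟨x', y'⟩ hv hv' (rfl : y = y')
    rw [Prod.mk_add_mk, add_zero] at hu' hv'
    rcases lt_trichotomy x x' with hlt | rfl | hlt
    · exact absurd (wings_row_convex hh hu hv (by omega) (by omega)) hv'
    · rfl
    · exact absurd (wings_row_convex hh hv hu (by omega) (by omega)) hu')
  have d3 : dirOut (rightWing n h ∪ leftWing n h) (0, 1) ≤ _ := dirOut_le_card _ _ _ _ hcol (by
    rintro ⟨x, y⟩ hu hu' ⟨x', y'⟩ hv hv' (rfl : x = x')
    rw [Prod.mk_add_mk, add_zero] at hu' hv'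
    rcases lt_trichotomy y y' with hlt | rfl | hlt
    · exact absurd (wings_col_convex hh hu hv (by omega) (by omega)) hu'
    · rfl
    · exact absurd (wings_col_convex hh hv hu (by omega) (by omega)) hv')
  have d4 : dirOut (rightWing n h ∪ leftWing n h) (0, -1) ≤ _ := dirOut_le_card _ _ _ _ hcol (by
    rintro ⟨x, y⟩ hu hu' ⟨x', y'⟩ hv hv' (rfl : x = x')
    rw [Prod.mk_add_mk, add_zero] at hu' hv'
    rcases lt_trichotomy y y' with hlt | rfl | hlt
    · exact absurd (wings_col_convex hh hu hv (by omega) (by omega)) hv'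
    · rfl
    · exact absurd (wings_col_convex hh hv hu (by omega) (by omega)) hu')
  rw [Int.card_Ico] at d1 d2 d3 d4
  unfold rhoDB
  rw [edgeP_eq]
  omega

/-- The integer solutions of `4w + 3h = K + 1` are `w = K + 1 - 3j`, `h = 4j - (K + 1)`; the `j`
closest to `7(K + 1)/24` makes `3h - 4w` at most `12` in absolute value. -/
lemma exists_dims (n K : ℤ) (hK : 95 ≤ K) (h : 48 * (n - 1) < K ^ 2) :
    ∃ w h : ℕ, 0 < h ∧ n ≤ w * h ∧ (4 * w + 3 * h : ℤ) = K + 1 := by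
  obtain ⟨j, hj1, hj2⟩ : ∃ j : ℤ, 24 * j ≤ 7 * (K + 1) + 12 ∧ 7 * (K + 1) - 12 ≤ 24 * j :=
    ⟨(7 * (K + 1) + 12) / 24, by omega, by omega⟩
  refine ⟨(K + 1 - 3 * j).toNat, (4 * j - (K + 1)).toNat, by omega, ?_, by omega⟩
  rw [Int.toNat_of_nonneg (by omega), Int.toNat_of_nonneg (by omega)]
  have : 0 ≤ (12 - (24 * j - 7 * (K + 1))) * (12 + (24 * j - 7 * (K + 1))) :=
    mul_nonneg (by omega) (by omega)
  nlinarith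

theorem stmt1 (ntilde : ℝ) (h : ntilde > 6000) :
    (∀ A B : Finset (ℤ × ℤ), Disjoint A B → A.Nonempty → B.Nonempty →
      (A.card : ℤ) = ⌈ntilde⌉ → (B.card : ℤ) = ⌈ntilde⌉ →
      ⌈2 * Real.sqrt (12 * ntilde)⌉ ≤ (rhoDB A B : ℤ)) ∧
    (∃ A B : Finset (ℤ × ℤ), Disjoint A B ∧ A.Nonempty ∧ B.Nonempty ∧
      (A.card : ℤ) = ⌈ntilde⌉ ∧ (B.card : ℤ) = ⌈ntilde⌉ ∧
      (rhoDB A B : ℤ) ≤ ⌈2 * Real.sqrt (12 * ntilde)⌉ + 1) := by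
  have hceil : ntilde ≤ (⌈ntilde⌉ : ℝ) := Int.le_ceil _
  have hceil' : (⌈ntilde⌉ : ℝ) < ntilde + 1 := Int.ceil_lt_add_one _
  have hn0 : (6000 : ℝ) < (⌈ntilde⌉ : ℝ) := h.trans_le hceil
  have hsq : Real.sqrt (12 * ntilde) ^ 2 = 12 * ntilde := Real.sq_sqrt (by linarith)
  have hs0 : 0 ≤ Real.sqrt (12 * ntilde) := Real.sqrt_nonneg _
  have hK := Int.le_ceil (2 * Real.sqrt (12 * ntilde))
  generalize ⌈ntilde⌉ = n at *
  constructor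
  · intro A B hAB _ _ hA hB
    have hl := lower_bound A B hAB n hA hB
    have hl' : (48 * n : ℝ) ≤ (rhoDB A B : ℝ) ^ 2 := by exact_mod_cast hl
    rw [Int.ceil_le]
    push_cast
    exact abs_le_of_sq_le_sq' (by nlinarith) (by positivity) |>.2
  · generalize ⌈2 * Real.sqrt (12 * ntilde)⌉ = K at *
    have hs : 48 ≤ Real.sqrt (12 * ntilde) := Real.le_sqrt_of_sq_le (by nlinarith)
    have hK1 : 95 ≤ K := by
      have : (95 : ℝ) ≤ K := by linarith
      exact_mod_cast this
    have hK2 : 48 * (n - 1) < K ^ 2 := by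
      have : (48 * (n - 1) : ℝ) < (K : ℝ) ^ 2 := by nlinarith
      exact_mod_cast this
    have hn1 : 0 < n := by
      have : (0 : ℝ) < n := by linarith
      exact_mod_cast this
    obtain ⟨w, k, hk, hwk, hsum⟩ := exists_dims n K hK1 hK2
    lift n to ℕ using hn1.le
    have hle := rhoDB_wing_le (n := n) (w := w) hk (by exact_mod_cast hwk)
    refine ⟨rightWing n k, leftWing n k, disjoint_wings hk, ?_, ?_, ?_, ?_, by omega⟩
    · rw [← Finset.card_pos, card_rightWing]
      omega
    · rw [← Finset.card_pos, card_leftWing]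
      omega
    · rw [card_rightWing]
    · rw [card_leftWing]
end

section
/- Let n, m be positive integers with α₀ < m/n ≤ 1/2, where α₀ = (688 − 480√2)/49. Then there exist disjoint finite sets A, B ⊆ ℤ² with |A| = n, |B| = m, and ρ_DB(A,B) ≤ ⌈4√n + 2√(2m)⌉ + 2. (Here 4√n + 2√(2m) is the continuous ℓ¹ double bubble minimum for volumes n and m when α₀ ≤ m/n ≤ 1/2.) -/
/-! ### Edge perimeters -/

/-- A finite set with convex rows and columns inside a `p × q` box has edge perimeter at most
`2 * (p + q)`: in each of the four directions, every line of the box carries at most one boundary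
edge. -/
theorem edgeP_le (S : Finset (ℤ × ℤ)) (p q : ℕ) (c : ℤ)
    (hx : ∀ u ∈ S, 0 ≤ u.1 ∧ u.1 < p) (hy : ∀ u ∈ S, c ≤ u.2 ∧ u.2 < c + q)
    (hrow : ∀ x x' y z : ℤ, (x, y) ∈ S → (x', y) ∈ S → x ≤ z → z ≤ x' → (z, y) ∈ S)
    (hcol : ∀ x y y' z : ℤ, (x, y) ∈ S → (x, y') ∈ S → y ≤ z → z ≤ y' → (x, z) ∈ S) :
    edgeP S ≤ 2 * (p + q) := by
  have h1 : edgeP S ≤ (S.filter (fun u => (u.1 + 1, u.2) ∉ S)).card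
      + (S.filter (fun u => (u.1 - 1, u.2) ∉ S)).card
      + (S.filter (fun u => (u.1, u.2 + 1) ∉ S)).card
      + (S.filter (fun u => (u.1, u.2 - 1) ∉ S)).card := by
    simp only [Finset.card_filter, ← Finset.sum_add_distrib, edgeP]
    refine Finset.sum_le_sum fun u _ => ?_
    rw [← Finset.card_filter]
    unfold nbrs
    have key : ∀ (a : ℤ × ℤ) (T : Finset (ℤ × ℤ)), ((insert a T).filter (· ∉ S)).card ≤
        (if a ∉ S then 1 else 0) + (T.filter (· ∉ S)).card := by
      intro a T
      rw [Finset.filter_insert]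
      have := Finset.card_insert_le a (T.filter (· ∉ S))
      by_cases ha : a ∈ S
      · simp [ha]
      · simp only [ha, not_false_eq_true, if_true]
        omega
    have k1 := key (u.1 + 1, u.2) {(u.1 - 1, u.2), (u.1, u.2 + 1), (u.1, u.2 - 1)}
    have k2 := key (u.1 - 1, u.2) {(u.1, u.2 + 1), (u.1, u.2 - 1)}
    have k3 := key (u.1, u.2 + 1) {(u.1, u.2 - 1)}
    have k4 := key (u.1, u.2 - 1) ∅
    rw [Finset.filter_empty, Finset.card_empty, insert_empty_eq] at k4
    omega
  have rows : ∀ P : ℤ × ℤ → Prop, ∀ _ : DecidablePred P,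
      (∀ x x' y, (x, y) ∈ S → P (x, y) → (x', y) ∈ S → P (x', y) → ¬ x < x') →
      (S.filter P).card ≤ q := by
    intro P _ h
    have := Finset.card_le_card_of_injOn (s := S.filter P) (t := Finset.Ico c (c + q))
      (fun u => u.2) (fun u hu => by
        have := hy u (Finset.mem_filter.1 hu).1
        simpa using this) (by
        rintro ⟨x, y⟩ hu ⟨x', y'⟩ hv (rfl : y = y')
        have hu := Finset.mem_filter.1 hu
        have hv := Finset.mem_filter.1 hv
        have h1 := h x x' y hu.1 hu.2 hv.1 hv.2
        have h2 := h x' x y hv.1 hv.2 hu.1 hu.2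
        rw [show x = x' by omega])
    simpa using this
  have cols : ∀ P : ℤ × ℤ → Prop, ∀ _ : DecidablePred P,
      (∀ x y y', (x, y) ∈ S → P (x, y) → (x, y') ∈ S → P (x, y') → ¬ y < y') →
      (S.filter P).card ≤ p := by
    intro P _ h
    have := Finset.card_le_card_of_injOn (s := S.filter P) (t := Finset.Ico (0 : ℤ) p)
      (fun u => u.1) (fun u hu => by
        have := hx u (Finset.mem_filter.1 hu).1
        simpa using this) (by
        rintro ⟨x, y⟩ hu ⟨x', y'⟩ hv (rfl : x = x')
        have hu := Finset.mem_filter.1 hu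
        have hv := Finset.mem_filter.1 hv
        have h1 := h x y y' hu.1 hu.2 hv.1 hv.2
        have h2 := h x y' y hv.1 hv.2 hu.1 hu.2
        rw [show y = y' by omega])
    simpa using this
  have e1 := rows (fun u => (u.1 + 1, u.2) ∉ S) inferInstance
    (fun x x' y a b a' _ l => b (hrow x x' y (x + 1) a a' (by omega) (by omega)))
  have e2 := rows (fun u => (u.1 - 1, u.2) ∉ S) inferInstance
    (fun x x' y a _ a' b l => b (hrow x x' y (x' - 1) a a' (by omega) (by omega)))
  have e3 := cols (fun u => (u.1, u.2 + 1) ∉ S) inferInstance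
    (fun x y y' a b a' _ l => b (hcol x y y' (y + 1) a a' (by omega) (by omega)))
  have e4 := cols (fun u => (u.1, u.2 - 1) ∉ S) inferInstance
    (fun x y y' a _ a' b l => b (hcol x y y' (y' - 1) a a' (by omega) (by omega)))
  omega

/-- `ρ_DB(A, B) = P(A) + P(B) - e(A, B)`, without subtraction. -/
theorem rhoDB_add_crossE (A B : Finset (ℤ × ℤ)) (h : Disjoint A B) :
    rhoDB A B + crossE B A = edgeP A + edgeP B := by
  have key : ∀ A B : Finset (ℤ × ℤ), Disjoint A B →
      ∑ u ∈ A, ((nbrs u).filter (fun v => v ∉ A ∪ B)).card + crossE A B = edgeP A := by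
    intro A B h
    unfold crossE edgeP
    rw [← Finset.sum_add_distrib]
    refine Finset.sum_congr rfl fun u _ => ?_
    rw [← Finset.card_union_of_disjoint]
    · congr 1
      ext v
      have : v ∈ A → v ∉ B := fun hv => Finset.disjoint_left.1 h hv
      simp only [Finset.mem_union, Finset.mem_filter]
      tauto
    · refine Finset.disjoint_left.2 fun v => ?_
      simp only [Finset.mem_union, Finset.mem_filter]
      tauto
  have h1 := key A B h
  have h2 := key B A h.symm
  rw [Finset.union_comm B A] at h2
  have h3 : edgeP (A ∪ B) = ∑ u ∈ A, ((nbrs u).filter (fun v => v ∉ A ∪ B)).card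
      + ∑ u ∈ B, ((nbrs u).filter (fun v => v ∉ A ∪ B)).card := by
    rw [edgeP, Finset.sum_union h]
  unfold rhoDB
  omega

/-! ### Stacks of rows -/

/-- The first `n` cells when rows of width `w` starting at the origin are filled upwards,
each from left to right. -/
def stackUp (w n : ℕ) : Finset (ℤ × ℤ) :=
  (Finset.range n).image fun i => (((i % w : ℕ) : ℤ), ((i / w : ℕ) : ℤ))

/-- The reflection of `stackUp`, its first row being at height `-1`. -/
def stackDown (w n : ℕ) : Finset (ℤ × ℤ) :=
  (Finset.range n).image fun i => (((i % w : ℕ) : ℤ), -1 - ((i / w : ℕ) : ℤ))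

theorem mem_stackUp {w n : ℕ} (hw : 0 < w) (x y : ℤ) :
    (x, y) ∈ stackUp w n ↔ 0 ≤ x ∧ x < w ∧ 0 ≤ y ∧ x + w * y < n := by
  simp only [stackUp, Finset.mem_image, Finset.mem_range, Prod.mk.injEq]
  constructor
  · rintro ⟨i, hi, rfl, rfl⟩
    refine ⟨by positivity, by exact_mod_cast Nat.mod_lt i hw, by positivity, ?_⟩
    have := Nat.mod_add_div i w
    exact_mod_cast this.trans_lt hi
  · rintro ⟨h0, h1, h2, h3⟩
    lift x to ℕ using h0
    lift y to ℕ using h2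
    norm_cast at h1 h3
    refine ⟨x + w * y, h3, ?_, ?_⟩
    · rw [Nat.add_mul_mod_self_left, Nat.mod_eq_of_lt h1]
    · rw [Nat.add_mul_div_left _ _ hw, Nat.div_eq_of_lt h1, zero_add]

theorem mem_stackDown {w n : ℕ} (x y : ℤ) :
    (x, y) ∈ stackDown w n ↔ (x, -1 - y) ∈ stackUp w n := by
  simp only [stackDown, stackUp, Finset.mem_image, Finset.mem_range, Prod.mk.injEq]
  refine exists_congr fun i => and_congr_right fun _ => and_congr_right fun _ => ?_
  omega

theorem card_stackUp (w n : ℕ) : (stackUp w n).card = n := by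
  rw [stackUp, Finset.card_image_of_injective, Finset.card_range]
  intro i j h
  simp only [Prod.mk.injEq, Nat.cast_inj] at h
  rw [← Nat.mod_add_div i w, ← Nat.mod_add_div j w, h.1, h.2]

theorem card_stackDown (w n : ℕ) : (stackDown w n).card = n := by
  rw [stackDown, Finset.card_image_of_injective, Finset.card_range]
  intro i j h
  simp only [Prod.mk.injEq, Nat.cast_inj, sub_right_inj] at h
  rw [← Nat.mod_add_div i w, ← Nat.mod_add_div j w, h.1, h.2]

theorem stackUp_lt {w n q : ℕ} (hw : 0 < w) (hq : n ≤ w * q) {x y : ℤ}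
    (h : (x, y) ∈ stackUp w n) : y < q := by
  rw [mem_stackUp hw] at h
  by_contra! hc
  have : (w : ℤ) * q ≤ w * y := by gcongr
  have : (n : ℤ) ≤ w * q := by exact_mod_cast hq
  omega

theorem stackUp_row {w n : ℕ} (hw : 0 < w) {x x' y z : ℤ} (h : (x, y) ∈ stackUp w n)
    (h' : (x', y) ∈ stackUp w n) (hz : x ≤ z) (hz' : z ≤ x') : (z, y) ∈ stackUp w n := by
  rw [mem_stackUp hw] at *
  omega

theorem stackUp_col {w n : ℕ} (hw : 0 < w) {x y y' z : ℤ} (h : (x, y) ∈ stackUp w n)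
    (h' : (x, y') ∈ stackUp w n) (hz : y ≤ z) (hz' : z ≤ y') : (x, z) ∈ stackUp w n := by
  rw [mem_stackUp hw] at *
  have : (w : ℤ) * z ≤ w * y' := by gcongr
  omega

theorem edgeP_stackUp {w n q : ℕ} (hw : 0 < w) (hq : n ≤ w * q) :
    edgeP (stackUp w n) ≤ 2 * (w + q) := by
  refine edgeP_le _ w q 0 ?_ ?_ ?_ ?_
  · rintro ⟨x, y⟩ h
    have := (mem_stackUp hw x y).1 h
    exact ⟨this.1, this.2.1⟩
  · rintro ⟨x, y⟩ h
    have h1 := (mem_stackUp hw x y).1 h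
    have h2 := stackUp_lt hw hq h
    constructor <;> simp only <;> omega
  · intro x x' y z h h' hz hz'
    exact stackUp_row hw h h' hz hz'
  · intro x y y' z h h' hz hz'
    exact stackUp_col hw h h' hz hz'

theorem edgeP_stackDown {w n q : ℕ} (hw : 0 < w) (hq : n ≤ w * q) :
    edgeP (stackDown w n) ≤ 2 * (w + q) := by
  refine edgeP_le _ w q (-q) ?_ ?_ ?_ ?_
  · rintro ⟨x, y⟩ h
    rw [mem_stackDown] at h
    have := (mem_stackUp hw _ _).1 h
    exact ⟨this.1, this.2.1⟩
  · rintro ⟨x, y⟩ h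
    rw [mem_stackDown] at h
    have h1 := (mem_stackUp hw _ _).1 h
    have h2 := stackUp_lt hw hq h
    constructor <;> simp only <;> omega
  · intro x x' y z h h' hz hz'
    rw [mem_stackDown] at *
    exact stackUp_row hw h h' hz hz'
  · intro x y y' z h h' hz hz'
    rw [mem_stackDown] at *
    exact stackUp_col hw h' h (by omega) (by omega)

theorem disjoint_stack {w n b m : ℕ} (hw : 0 < w) (hb : 0 < b) :
    Disjoint (stackUp w n) (stackDown b m) := by
  rw [Finset.disjoint_left]
  rintro ⟨x, y⟩ h h'
  rw [mem_stackDown, mem_stackUp hb] at h'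
  rw [mem_stackUp hw] at h
  omega

/-- The full bottom row of length `b` of the upper box faces the full top row of the lower one. -/
theorem le_crossE {w n b m : ℕ} (hw : 0 < w) (hb : 0 < b) (hbw : b ≤ w) (hbn : b ≤ n)
    (hbm : b ≤ m) : b ≤ crossE (stackDown b m) (stackUp w n) := by
  let R : Finset (ℤ × ℤ) := (Finset.range b).image fun i : ℕ => ((i : ℤ), (-1 : ℤ))
  have hR : R.card = b := by
    rw [Finset.card_image_of_injective, Finset.card_range]
    intro i j h
    simpa using h
  have hsub : R ⊆ stackDown b m := by
    intro u hu
    obtain ⟨i, hi, rfl⟩ := Finset.mem_image.1 hu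
    have := Finset.mem_range.1 hi
    rw [mem_stackDown, mem_stackUp hb]
    omega
  calc b = ∑ u ∈ R, 1 := by simp [hR]
    _ ≤ ∑ u ∈ R, ((nbrs u).filter (fun v => v ∈ stackUp w n)).card := by
      refine Finset.sum_le_sum fun u hu => ?_
      obtain ⟨i, hi, rfl⟩ := Finset.mem_image.1 hu
      have := Finset.mem_range.1 hi
      refine Finset.card_pos.2 ⟨((i : ℤ), 0), Finset.mem_filter.2 ⟨by simp [nbrs], ?_⟩⟩
      rw [mem_stackUp hw]
      omega
    _ ≤ _ := Finset.sum_le_sum_of_subset hsub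

/-! ### Choice of the dimensions -/

/-- Minimising `2 * a + b` over integers with `m ≤ b * a`: any `s` with `s ^ 2 ≥ 8 * m` can be
reached. Taking `b` about `s / 2` with the parity of `s` works, depending on `s` modulo `4`;
keeping `b ≤ m` ensures that the first row of the box is full. -/
theorem exists_box (m s : ℕ) (hm : 0 < m) (hs : 8 * m ≤ s * s) :
    ∃ a b : ℕ, 0 < b ∧ b ≤ m ∧ m ≤ b * a ∧ 2 * a + b ≤ s ∧ b ≤ (s + 1) / 2 := by
  have h : ∃ a b : ℕ, m ≤ b * a ∧ 2 * a + b ≤ s ∧ b ≤ (s + 1) / 2 := by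
    obtain ⟨k, hk⟩ : ∃ k, k = s / 4 := ⟨_, rfl⟩
    have hcases : s = 4 * k ∨ s = 4 * k + 1 ∨ s = 4 * k + 2 ∨ s = 4 * k + 3 := by omega
    clear hk
    rcases hcases with rfl | rfl | rfl | rfl
    · exact ⟨k, 2 * k, by nlinarith, by omega, by omega⟩
    · refine ⟨k, 2 * k + 1, ?_, by omega, by omega⟩
      ring_nf at hs ⊢; omega
    · refine ⟨k + 1, 2 * k, ?_, by omega, by omega⟩
      ring_nf at hs ⊢; omega
    · refine ⟨k + 1, 2 * k + 1, ?_, by omega, by omega⟩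
      ring_nf at hs ⊢; omega
  obtain ⟨a, b, h1, h2, h3⟩ := h
  have ha : 0 < a := by
    rcases Nat.eq_zero_or_pos a with rfl | h
    · omega
    · exact h
  have hb : 0 < b := by
    rcases Nat.eq_zero_or_pos b with rfl | h
    · omega
    · exact h
  -- If one row already has room for more than `m` cells, a single row of length `m` is better.
  rcases le_total b m with h | h
  · exact ⟨a, b, hb, h, h1, h2, h3⟩
  · exact ⟨1, m, hm, le_rfl, by omega, by omega, by omega⟩

theorem stmt7 (n m : ℕ) (hn : 0 < n) (hm : 0 < m)
    (hlow : (688 - 480 * Real.sqrt 2) / 49 < (m : ℝ) / n)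
    (hhigh : (m : ℝ) / n ≤ 1 / 2) :
    ∃ A B : Finset (ℤ × ℤ), Disjoint A B ∧ A.card = n ∧ B.card = m ∧
      (rhoDB A B : ℤ) ≤ ⌈4 * Real.sqrt n + 2 * Real.sqrt (2 * m)⌉ + 2 := by
  have hmn : 2 * (m : ℝ) ≤ n := by
    rw [div_le_iff₀ (by positivity)] at hhigh
    linarith
  have hmn' : 2 * m ≤ n := by exact_mod_cast hmn
  set t := ⌈2 * Real.sqrt n⌉₊ with ht
  set s := ⌈2 * Real.sqrt (2 * m)⌉₊ with hs
  have hst : s ≤ t := Nat.ceil_mono (by gcongr)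
  have ht4 : 4 * n ≤ t * t := by
    have h1 : 2 * Real.sqrt n ≤ t := Nat.le_ceil _
    have h2 := Real.mul_self_sqrt (Nat.cast_nonneg (α := ℝ) n)
    have h3 := Real.sqrt_nonneg (n : ℝ)
    have : (4 * n : ℝ) ≤ t * t := by nlinarith
    exact_mod_cast this
  have hs8 : 8 * m ≤ s * s := by
    have h1 : 2 * Real.sqrt (2 * m) ≤ s := Nat.le_ceil _
    have h2 := Real.mul_self_sqrt (show (0 : ℝ) ≤ 2 * m by positivity)
    have h3 := Real.sqrt_nonneg (2 * m : ℝ)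
    have : (8 * m : ℝ) ≤ s * s := by nlinarith
    exact_mod_cast this
  have hround : ((2 * t + s : ℕ) : ℤ) ≤ ⌈4 * Real.sqrt n + 2 * Real.sqrt (2 * m)⌉ + 2 := by
    have h1 : (t : ℝ) < 2 * Real.sqrt n + 1 := Nat.ceil_lt_add_one (by positivity)
    have h2 : (s : ℝ) < 2 * Real.sqrt (2 * m) + 1 := Nat.ceil_lt_add_one (by positivity)
    have h3 := Int.le_ceil (4 * Real.sqrt n + 2 * Real.sqrt (2 * m))
    have h4 : ((2 * t + s : ℕ) : ℝ) < ((⌈4 * Real.sqrt n + 2 * Real.sqrt (2 * m)⌉ + 3 : ℤ) : ℝ) := by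
      push_cast
      linarith
    have h5 : ((2 * t + s : ℕ) : ℤ) < ⌈4 * Real.sqrt n + 2 * Real.sqrt (2 * m)⌉ + 3 := by
      exact_mod_cast h4
    omega
  clear_value s t
  have hbox : n ≤ (t + 1) / 2 * (t / 2) := by
    rcases Nat.even_or_odd' t with ⟨k, rfl | rfl⟩
    · rw [show (2 * k + 1) / 2 = k by omega, show 2 * k / 2 = k by omega]
      nlinarith
    · rw [show (2 * k + 1 + 1) / 2 = k + 1 by omega, show (2 * k + 1) / 2 = k by omega]
      ring_nf at ht4 ⊢; omega
  obtain ⟨a, b, hb, hbm, hab, habs, hbs⟩ := exists_box m s hm hs8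
  have hw : 0 < (t + 1) / 2 := by omega
  refine ⟨stackUp ((t + 1) / 2) n, stackDown b m, disjoint_stack hw hb, card_stackUp _ _,
    card_stackDown _ _, le_trans ?_ hround⟩
  have e1 := edgeP_stackUp hw hbox
  have e2 := edgeP_stackDown hb hab
  have e3 := le_crossE (w := (t + 1) / 2) (n := n) hw hb (by omega) (by omega) hbm
  have e4 := rhoDB_add_crossE _ _ (disjoint_stack (n := n) (m := m) hw hb)
  have e5 : (t + 1) / 2 + t / 2 = t := by omega
  rw [e5] at e1
  exact_mod_cast (by omega)
end
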